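/- Every finite-dimensional irreducible complex representation of G (i.e. every simple object of FDRep ℂ G) has dimension 1 or 4; moreover the abelianization of G has order 4 (so G has exactly four 1-dimensional representations). -/

import Mathlib

open CategoryTheory

/-- The coordinate permutation τ = (0 4 1 3) on six letters. -/
def τ6 : Equiv.Perm (Fin 6) := c[0, 4, 1, 3]

/-- The coordinate permutation h = (2 0 4 3 1) on six letters. -/
def h6 : Equiv.Perm (Fin 6) := c[2, 0, 4, 3, 1]

/-- The subgroup G = ⟨τ, h⟩ of S₆, isomorphic to GA(1,5). -/
def G6 : Subgroup (Equiv.Perm (Fin 6)) := Subgroup.closure {τ6, h6}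


theorem simple_nontrivial {G : Type} [Group G] (V : FDRep ℂ G) [Simple V] : Nontrivial V := by
  by_contra hn
  rw [not_nontrivial_iff_subsingleton] at hn
  apply id_nonzero V
  ext x
  exact Subsingleton.elim (α := V) _ _

theorem simple_submodule {G : Type} [Group G] (V : FDRep ℂ G) [Simple V]
    (W : Submodule ℂ V) (hW : ∀ g : G, ∀ v ∈ W, V.ρ g v ∈ W) (hne : ∃ w ∈ W, w ≠ 0) :
    W = ⊤ := by
  let σ : Representation ℂ G W :=
    (⟨W, fun g v hv => hW g v hv⟩ : Subrepresentation (ρ := V.ρ)).toRepresentation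
  let f : FDRep.of σ ⟶ V :=
    { hom := InducedCategory.homMk (ModuleCat.ofHom W.subtype)
      comm := by
        intro g
        ext x
        rfl }
  have hf : ∀ x : W, f.hom.hom.hom x = (x : V) := fun x => rfl
  have : Mono f := by
    constructor
    intro Z a b hab
    ext x
    have h1 := congrArg (fun k : Z ⟶ V => k.hom.hom.hom x) hab
    exact h1
  have hf0 : f ≠ 0 := by
    rintro h0
    obtain ⟨w, hw, hw0⟩ := hne
    apply hw0
    have h1 := congrArg (fun k : FDRep.of σ ⟶ V => k.hom.hom.hom (⟨w, hw⟩ : W)) h0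
    exact h1
  have := isIso_of_mono_of_nonzero hf0
  rw [eq_top_iff]
  intro v _
  have h1 := congrArg (fun k : V ⟶ V => k.hom.hom.hom v) (IsIso.inv_hom_id f)
  have h2 : (((inv f).hom.hom.hom v : W) : V) = v := h1
  rw [← h2]
  exact Subtype.property _

theorem rel1 : τ6 * h6 * τ6⁻¹ = h6 ^ 2 := by decide
theorem rel1' : τ6⁻¹ * h6 * τ6 = h6 ^ 3 := by decide
set_option maxRecDepth 10000 in
theorem rel2 : h6 ^ 5 = 1 := by decide
theorem rel3 : τ6 ^ 4 = 1 := by decide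
theorem rel4 : ¬ (τ6 ^ 2 * h6 = h6 * τ6 ^ 2) := by decide

theorem τmem : τ6 ∈ G6 := Subgroup.subset_closure (by simp)
theorem hmem : h6 ∈ G6 := Subgroup.subset_closure (by simp)

theorem conj_h6_pow (g : Equiv.Perm (Fin 6)) (hg : g ∈ G6) : ∃ n : ℤ, g * h6 * g⁻¹ = h6 ^ n := by
  have hle : G6 ≤ Subgroup.normalizer (Subgroup.zpowers h6 : Set (Equiv.Perm (Fin 6))) := by
    rw [G6, Subgroup.closure_le]
    rintro x (rfl | rfl)
    · rw [SetLike.mem_coe, Subgroup.mem_normalizer_iff]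
      intro y
      constructor
      · rintro ⟨n, rfl⟩
        refine ⟨2 * n, ?_⟩
        show h6 ^ (2 * n) = _ * h6 ^ n * _
        rw [← conj_zpow, rel1, zpow_mul]; rfl
      · rintro ⟨n, hn⟩
        refine ⟨3 * n, ?_⟩
        have hn : h6 ^ n = τ6 * y * τ6⁻¹ := hn
        have : y = τ6⁻¹ * h6 ^ n * τ6⁻¹⁻¹ := by rw [hn]; group
        show h6 ^ (3 * n) = _
        rw [this, ← conj_zpow, inv_inv, rel1', zpow_mul]; rfl
    · exact Subgroup.le_normalizer (Subgroup.mem_zpowers _)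
  have := (Subgroup.mem_normalizer_iff.1 (hle hg) h6).1 (Subgroup.mem_zpowers _)
  obtain ⟨n, hn⟩ := this
  exact ⟨n, hn.symm⟩

/-- Generators as elements of the subgroup. -/
def tG : G6 := ⟨τ6, τmem⟩
/-- Generators as elements of the subgroup. -/
def hG : G6 := ⟨h6, hmem⟩

theorem G_top : Subgroup.closure ({tG, hG} : Set G6) = ⊤ := by
  have h1 : ({tG, hG} : Set G6) = Set.preimage Subtype.val ({τ6, h6} : Set (Equiv.Perm (Fin 6))) := by
    ext ⟨x, hx⟩
    simp [tG, hG, Subtype.ext_iff]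
  rw [h1]
  exact Subgroup.closure_closure_coe_preimage

theorem comm_le : commutator G6 ≤ Subgroup.centralizer {hG} := by
  rw [commutator_eq_closure, Subgroup.closure_le]
  rintro _ ⟨⟨a, ha⟩, ⟨b, hb⟩, rfl⟩
  rw [SetLike.mem_coe, Subgroup.mem_centralizer_singleton_iff]
  apply Subtype.ext
  obtain ⟨m, hm⟩ := conj_h6_pow a⁻¹ (inv_mem ha)
  obtain ⟨n, hn⟩ := conj_h6_pow b⁻¹ (inv_mem hb)
  show (a * b * a⁻¹ * b⁻¹) * h6 = h6 * (a * b * a⁻¹ * b⁻¹)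
  have e1 : (a⁻¹ * b⁻¹) * h6 * (a⁻¹ * b⁻¹)⁻¹ = h6 ^ (m * n) := by
    have : (a⁻¹ * b⁻¹) * h6 * (a⁻¹ * b⁻¹)⁻¹ = a⁻¹ * (b⁻¹ * h6 * b⁻¹⁻¹) * a⁻¹⁻¹ := by group
    rw [this, hn, ← conj_zpow, hm, zpow_mul]
  have e2 : (b⁻¹ * a⁻¹) * h6 * (b⁻¹ * a⁻¹)⁻¹ = h6 ^ (m * n) := by
    have : (b⁻¹ * a⁻¹) * h6 * (b⁻¹ * a⁻¹)⁻¹ = b⁻¹ * (a⁻¹ * h6 * a⁻¹⁻¹) * b⁻¹⁻¹ := by group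
    rw [this, hm, ← conj_zpow, hn, mul_comm m n, zpow_mul]
  have e3 := e1.trans e2.symm
  calc (a * b * a⁻¹ * b⁻¹) * h6
      = a * b * ((a⁻¹ * b⁻¹) * h6 * (a⁻¹ * b⁻¹)⁻¹) * (a⁻¹ * b⁻¹) := by group
    _ = a * b * ((b⁻¹ * a⁻¹) * h6 * (b⁻¹ * a⁻¹)⁻¹) * (a⁻¹ * b⁻¹) := by rw [e3]
    _ = _ := by group

theorem card_ab : Nat.card (Abelianization G6) = 4 := by
  set t := Abelianization.of tG with ht
  have r1 : tG * hG * tG⁻¹ = hG ^ 2 := Subtype.ext rel1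
  have r3 : tG ^ 4 = 1 := Subtype.ext rel3
  have hh : Abelianization.of hG = 1 := by
    have := congrArg Abelianization.of r1
    simp only [map_mul, map_inv, map_pow] at this
    rw [mul_comm, inv_mul_cancel_left, pow_two] at this
    exact (left_eq_mul.1 this)
  have hz : Subgroup.zpowers t = ⊤ := by
    rw [eq_top_iff]
    have h1 : (⊤ : Subgroup (Abelianization G6)) = Subgroup.map Abelianization.of ⊤ := by
      rw [← MonoidHom.range_eq_map]
      exact (MonoidHom.range_eq_top.2 (QuotientGroup.mk'_surjective _)).symm
    rw [h1, ← G_top, MonoidHom.map_closure, Subgroup.closure_le]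
    rintro _ ⟨x, rfl | rfl, rfl⟩
    · exact Subgroup.mem_zpowers _
    · rw [hh]; exact one_mem _
  have ho : orderOf t = 4 := by
    have : orderOf t = 2 ^ (1 + 1) := by
      have : Fact (Nat.Prime 2) := ⟨Nat.prime_two⟩
      apply orderOf_eq_prime_pow
      · intro h
        have h2 : tG ^ 2 ∈ commutator G6 := by
          rw [← Abelianization.ker_of, MonoidHom.mem_ker, map_pow]
          simpa using h
        have h3 := comm_le h2
        rw [Subgroup.mem_centralizer_singleton_iff] at h3
        have h4 : ((tG ^ 2 * hG : G6) : Equiv.Perm (Fin 6)) = ((hG * tG ^ 2 : G6) : Equiv.Perm (Fin 6)) :=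
          congrArg Subtype.val h3
        simp only [Subgroup.coe_mul, Subgroup.coe_pow] at h4
        exact rel4 h4
      · rw [ht, ← map_pow]
        norm_num [r3]
    simpa using this
  rw [← ho, ← Nat.card_zpowers, hz, Subgroup.card_top]

theorem core {V : Type} [AddCommGroup V] [Module ℂ V] [FiniteDimensional ℂ V] [Nontrivial V]
    (H T : Module.End ℂ V) (hH : H ^ 5 = 1) (hT : T ^ 4 = 1) (hHT : H * T = T * H ^ 3)
    (hirr : ∀ W : Submodule ℂ V, (∀ v ∈ W, H v ∈ W) → (∀ v ∈ W, T v ∈ W) →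
      (∃ w ∈ W, w ≠ 0) → W = ⊤) :
    Module.finrank ℂ V = 1 ∨ Module.finrank ℂ V = 4 := by
  have hHT' : ∀ v, H (T v) = T (H (H (H v))) := fun v => by
    have := LinearMap.congr_fun hHT v
    simpa [pow_succ] using this
  by_cases hfix : ∃ v, v ≠ 0 ∧ H v = v
  · left
    obtain ⟨v, hv0, hv⟩ := hfix
    have h1 : LinearMap.eqLocus H (LinearMap.id) = ⊤ := by
      apply hirr
      · intro w hw
        simp only [LinearMap.mem_eqLocus, LinearMap.id_apply] at hw ⊢
        rw [hw, hw]
      · intro w hw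
        simp only [LinearMap.mem_eqLocus, LinearMap.id_apply] at hw ⊢
        rw [hHT', hw, hw, hw]
      · exact ⟨v, by simpa using hv, hv0⟩
    have h2 : ∀ w, H w = w := fun w => by
      have : w ∈ LinearMap.eqLocus H (LinearMap.id) := by rw [h1]; trivial
      simpa using this
    obtain ⟨c, hc⟩ := Module.End.exists_eigenvalue T
    obtain ⟨u, hu⟩ := hc.exists_hasEigenvector
    have h3 : Submodule.span ℂ {u} = ⊤ := by
      apply hirr
      · intro w hw; rw [h2]; exact hw
      · intro w hw
        obtain ⟨a, rfl⟩ := Submodule.mem_span_singleton.1 hw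
        rw [map_smul, hu.apply_eq_smul]
        exact Submodule.smul_mem _ _ (Submodule.smul_mem _ _ (Submodule.mem_span_singleton_self u))
      · exact ⟨u, Submodule.mem_span_singleton_self u, hu.2⟩
    rw [← finrank_top, ← h3, finrank_span_singleton hu.2]
  · right
    push Not at hfix
    obtain ⟨μ, hμ⟩ := Module.End.exists_eigenvalue H
    obtain ⟨v, hv⟩ := hμ.exists_hasEigenvector
    have hv1 := hv.apply_eq_smul
    have hv0 : v ≠ 0 := hv.2
    have hμ1 : μ ≠ 1 := by
      rintro rfl
      exact hfix v hv0 (by simpa using hv1)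
    have hμ5 : μ ^ 5 = 1 := by
      have := LinearMap.congr_fun hH v
      rw [hv.pow_apply 5] at this
      have h2 : (μ ^ 5 - 1) • v = 0 := by rw [sub_smul, this]; simp
      exact sub_eq_zero.1 ((smul_eq_zero.1 h2).resolve_right hv0)
    have hprim : IsPrimitiveRoot μ 5 := by
      have : Fact (Nat.Prime 5) := ⟨by norm_num⟩
      have := orderOf_eq_prime hμ5 hμ1
      rw [← this]
      exact IsPrimitiveRoot.orderOf μ
    have hT4 : ∀ w, T (T (T (T w))) = w := fun w => by
      have := LinearMap.congr_fun hT w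
      simpa [pow_succ] using this
    have step : ∀ w : V, ∀ a : ℂ, H w = a • w → H (T w) = a ^ 3 • T w := by
      intro w a hw
      rw [hHT', hw]
      simp only [map_smul, hw, smul_smul]
      congr 1; ring
    have Tinj : ∀ w, w ≠ 0 → T w ≠ 0 := by
      intro w hw h0
      apply hw
      rw [← hT4 w, h0]; simp
    let e : Fin 4 → ℕ := ![1, 3, 4, 2]
    let w : Fin 4 → V := ![v, T v, T (T v), T (T (T v))]
    have k1 := step v μ hv1
    have k2 : H (T (T v)) = μ ^ 4 • T (T v) := by
      rw [step _ _ k1]; congr 1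
      linear_combination μ ^ 4 * hμ5
    have k3 : H (T (T (T v))) = μ ^ 2 • T (T (T v)) := by
      rw [step _ _ k2]; congr 1
      linear_combination (μ ^ 7 + μ ^ 2) * hμ5
    have hw : ∀ i, H.HasEigenvector (μ ^ e i) (w i) := by
      intro i
      rw [Module.End.hasEigenvector_iff, Module.End.mem_eigenspace_iff]
      fin_cases i
      · exact ⟨by simpa [e, w] using hv1, hv0⟩
      · exact ⟨k1, Tinj _ hv0⟩
      · exact ⟨k2, Tinj _ (Tinj _ hv0)⟩
      · exact ⟨k3, Tinj _ (Tinj _ (Tinj _ hv0))⟩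
    have hinj : Function.Injective (fun i => μ ^ e i) := by
      intro i j hij
      have h1 : ∀ i, e i < 5 := by decide
      have h2 := hprim.pow_inj (h1 i) (h1 j) hij
      have h3 : ∀ i j, e i = e j → i = j := by decide
      exact h3 i j h2
    have hli : LinearIndependent ℂ w :=
      Module.End.eigenvectors_linearIndependent' H _ hinj w hw
    have htop : Submodule.span ℂ (Set.range w) = ⊤ := by
      apply hirr
      · intro x hx
        induction hx using Submodule.span_induction with
        | mem x hx =>
          obtain ⟨i, rfl⟩ := hx
          rw [(hw i).apply_eq_smul]
          exact Submodule.smul_mem _ _ (Submodule.subset_span ⟨i, rfl⟩)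
        | zero => simp
        | add x y _ _ hx hy => rw [map_add]; exact add_mem hx hy
        | smul a x _ hx => rw [map_smul]; exact Submodule.smul_mem _ _ hx
      · intro x hx
        induction hx using Submodule.span_induction with
        | mem x hx =>
          obtain ⟨i, rfl⟩ := hx
          apply Submodule.subset_span
          refine ⟨i + 1, ?_⟩
          fin_cases i
          · rfl
          · rfl
          · rfl
          · exact (hT4 v).symm
        | zero => simp
        | add x y _ _ hx hy => rw [map_add]; exact add_mem hx hy
        | smul a x _ hx => rw [map_smul]; exact Submodule.smul_mem _ _ hx
      · exact ⟨v, Submodule.subset_span ⟨0, rfl⟩, hv0⟩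
    rw [← finrank_top, ← htop, finrank_span_eq_card hli]
    simp

theorem rel5 : hG * tG = tG * hG ^ 3 := by
  have h : h6 * τ6 = τ6 * h6 ^ 3 := by rw [← rel1']; group
  exact Subtype.ext h

theorem invariant_of_gens (V : FDRep ℂ G6) (W : Submodule ℂ V)
    (hh : ∀ v ∈ W, V.ρ hG v ∈ W) (ht : ∀ v ∈ W, V.ρ tG v ∈ W) (g : G6) :
    ∀ v ∈ W, V.ρ g v ∈ W := by
  have hg : g ∈ Subgroup.closure ({tG, hG} : Set G6) := by rw [G_top]; trivial
  induction hg using Subgroup.closure_induction with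
  | mem x hx =>
    rcases hx with rfl | rfl
    · exact ht
    · exact hh
  | one => intro v hv; simpa using hv
  | mul x y _ _ hx hy =>
    intro v hv
    rw [map_mul]
    exact hx _ (hy _ hv)
  | inv x _ hx =>
    have hp : ∀ n : ℕ, ∀ v ∈ W, V.ρ (x ^ n) v ∈ W := by
      intro n
      induction n with
      | zero => intro v hv; simpa using hv
      | succ n ih =>
        intro v hv
        rw [pow_succ, map_mul]
        exact ih _ (hx _ hv)
    have h1 : x⁻¹ ∈ Submonoid.powers x :=
      mem_powers_iff_mem_zpowers.2 (inv_mem (Subgroup.mem_zpowers x))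
    obtain ⟨n, hn⟩ := h1
    rw [← hn]
    exact hp n

/-- Every irreducible finite-dimensional complex representation of G has
dimension 1 or 4, and the abelianization of G has order 4 (so that G has
exactly four 1-dimensional representations). -/
theorem irreps_of_G_have_dim_one_or_four :
    (∀ V : FDRep ℂ G6, Simple V →
      Module.finrank ℂ V = 1 ∨ Module.finrank ℂ V = 4) ∧
    Nat.card (Abelianization G6) = 4 := by
  refine ⟨fun V hV => ?_, card_ab⟩
  have := simple_nontrivial V
  apply core (V.ρ hG) (V.ρ tG)
  · rw [← map_pow, show hG ^ 5 = 1 from Subtype.ext rel2, map_one]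
  · rw [← map_pow, show tG ^ 4 = 1 from Subtype.ext rel3, map_one]
  · rw [← map_pow, ← map_mul, ← map_mul, rel5]
  · intro W hh ht hne
    exact simple_submodule V W (fun g => invariant_of_gens V W hh ht g) hne
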